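/- Let Y = (Y_1, …, Y_p) follow the MPGIG_p(λ, φ, α) distribution with λ_1, …, λ_p > 0, φ > 0, α ∈ ℝ, and write R_{α,k}(φ) = K_{k+α}(φ)/K_α(φ) and R_α(φ) = R_{α,1}(φ). Then for all i ≠ j, E(Y_i Y_j) = ∑_{y ∈ ℕ^p} y_i y_j P(y) is finite and cov(Y_i, Y_j) = E(Y_i Y_j) − E(Y_i)E(Y_j) = λ_i λ_j { R_{α,2}(φ) − R_α(φ)² }. -/

import Mathlib

/-!
The MPGIG law is a mixed Poisson law: rescaling the Bessel integral by `√(2Λ+φ)/√φ` gives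
`P(y) = (2 K_α(φ))⁻¹ ∫_0^∞ z^(α-1) exp(-φ(z+z⁻¹)/2) ∏ₖ e^(-λₖ z) (λₖ z)^(yₖ) / yₖ! dz`
(`mpgigPMF_eq_integral`). Given the mixing variable `z`, the coordinates are independent Poisson
variables of means `λₖ z`, so for a set `S` of coordinates the conditional mean of `∏_{k ∈ S} yₖ`
is `z^|S| ∏_{k ∈ S} λₖ`. Dominated convergence (all terms are nonnegative, and the summed integrand
is again a Bessel integrand) exchanges sum and integral, whence
`E ∏_{k ∈ S} Yₖ = (∏_{k ∈ S} λₖ) K_{|S|+α}(φ) / K_α(φ)` (`hasSum_mpgig_moment`).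
The covariance formula combines the cases `S = {i, j}`, `{i}` and `{j}`.
-/

open MeasureTheory Real Set Finset

/-- Second-kind modified Bessel function:
`K_α(x) = (1/2) ∫_0^∞ u^(α−1) exp(−x(u+u⁻¹)/2) du`. -/
noncomputable def besselK (α x : ℝ) : ℝ :=
  (1/2) * ∫ u in Set.Ioi (0:ℝ), u ^ (α - 1) * Real.exp (-(x * (u + u⁻¹)) / 2)

/-- Generalized inverse-Gaussian `GIG(a,b,α)` density. -/
noncomputable def gigPDF (a b α z : ℝ) : ℝ :=
  ((a / b) ^ (α / 2) / (2 * besselK α (Real.sqrt (a * b)))) *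
    z ^ (α - 1) * Real.exp (-(a * z + b * z⁻¹) / 2)

/-- The `MPGIG_p(λ, φ, α)` probability mass function. -/
noncomputable def mpgigPMF (p : ℕ) (lam : Fin p → ℝ) (φ α : ℝ) (y : Fin p → ℕ) : ℝ :=
  (besselK ((∑ i, (y i : ℝ)) + α) (Real.sqrt (φ * (2 * (∑ i, lam i) + φ))) / besselK α φ) *
    (∏ i, lam i ^ (y i) / (Nat.factorial (y i) : ℝ)) *
    (φ / (2 * (∑ i, lam i) + φ)) ^ (((∑ i, (y i : ℝ)) + α) / 2)

lemma HasSum.of_eq {ι : Type*} {f g : ι → ℝ} {a b : ℝ} (h : HasSum f a) (hfg : ∀ y, g y = f y)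
    (hab : b = a) : HasSum g b := by
  rw [hab, funext hfg]
  exact h

/-- The singularity of `u ^ (α - 1)` at `0` is absorbed by `exp (-x / (2u)) ≤ n! (2u / x) ^ n` for
`n > -α`, which leaves a Gamma integrand. -/
lemma integrableOn_besselK (α x : ℝ) (hx : 0 < x) :
    IntegrableOn (fun u : ℝ => u ^ (α - 1) * Real.exp (-(x * (u + u⁻¹)) / 2)) (Set.Ioi 0) := by
  obtain ⟨n, hn⟩ := exists_nat_gt (-α)
  have hG := integrableOn_rpow_mul_exp_neg_mul_rpow (s := n + α - 1) (p := 1) (b := x / 2)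
    (by linarith) one_pos (by positivity)
  refine Integrable.mono' (hG.const_mul ((n.factorial : ℝ) * (2 / x) ^ n)) ?_ ?_
  · exact Measurable.aestronglyMeasurable (by fun_prop)
  · refine (ae_restrict_mem measurableSet_Ioi).mono fun u hu => ?_
    have hu : 0 < u := hu
    rw [Real.norm_of_nonneg (by positivity)]
    have h1 := Real.pow_div_factorial_le_exp (x / (2 * u)) (by positivity) n
    have h2 : Real.exp (-(x / (2 * u))) ≤ n.factorial * (2 / x) ^ n * u ^ n := by
      rw [Real.exp_neg]
      calc _ ≤ ((x / (2 * u)) ^ n / n.factorial)⁻¹ := by gcongr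
        _ = _ := by
          rw [inv_div, div_pow, div_pow, mul_pow]
          field_simp
    have h3 : u ^ ((n : ℝ) + α - 1) = u ^ n * u ^ (α - 1) := by
      rw [add_sub_assoc, Real.rpow_add hu, Real.rpow_natCast]
    have h4 : -(x * (u + u⁻¹)) / 2 = -(x / (2 * u)) + -(x / 2) * u := by
      field_simp
      ring
    rw [h3, h4, Real.exp_add, Real.rpow_one]
    calc _ = Real.exp (-(x / (2 * u))) * (u ^ (α - 1) * Real.exp (-(x / 2) * u)) := by ring
      _ ≤ n.factorial * (2 / x) ^ n * u ^ n * (u ^ (α - 1) * Real.exp (-(x / 2) * u)) := by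
        gcongr
      _ = _ := by ring

lemma besselK_mul_rpow (a b ν : ℝ) (ha : 0 < a) (hb : 0 < b) :
    besselK ν (Real.sqrt (b * a)) * (b / a) ^ (ν / 2) =
      (1 / 2) * ∫ z in Set.Ioi (0 : ℝ), z ^ (ν - 1) * Real.exp (-(a * z + b * z⁻¹) / 2) := by
  have hsa : 0 < √a := Real.sqrt_pos.2 ha
  have hsb : 0 < √b := Real.sqrt_pos.2 hb
  have hc : 0 < √a / √b := by positivity
  have key := integral_comp_mul_left_Ioi
    (fun u : ℝ => u ^ (ν - 1) * Real.exp (-(Real.sqrt (b * a) * (u + u⁻¹)) / 2)) 0 hc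
  have hcongr : ∫ z in Set.Ioi (0 : ℝ), (√a / √b * z) ^ (ν - 1) *
        Real.exp (-(Real.sqrt (b * a) * (√a / √b * z + (√a / √b * z)⁻¹)) / 2) =
      ∫ z in Set.Ioi (0 : ℝ), (√a / √b) ^ (ν - 1) *
        (z ^ (ν - 1) * Real.exp (-(a * z + b * z⁻¹) / 2)) := by
    refine setIntegral_congr_fun measurableSet_Ioi fun z hz => ?_
    have hz : 0 < z := hz
    have h1 : Real.sqrt (b * a) * (√a / √b * z + (√a / √b * z)⁻¹) = a * z + b * z⁻¹ := by
      rw [Real.sqrt_mul hb.le]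
      field_simp
      rw [Real.sq_sqrt ha.le, Real.sq_sqrt hb.le]
      ring
    simp only [h1]
    rw [Real.mul_rpow hc.le hz.le, mul_assoc]
  simp only [hcongr, mul_zero, smul_eq_mul] at key
  rw [integral_const_mul, Real.rpow_sub_one hc.ne'] at key
  have h2 : (b / a) ^ (ν / 2) = ((√a / √b) ^ ν)⁻¹ := by
    have : b / a = ((√a / √b) ^ (2 : ℝ))⁻¹ := by
      rw [Real.rpow_two, div_pow, Real.sq_sqrt ha.le, Real.sq_sqrt hb.le, inv_div]
    rw [this, Real.inv_rpow (by positivity), ← Real.rpow_mul hc.le]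
    congr 2
    ring
  have hp : 0 < (√a / √b) ^ ν := by positivity
  rw [besselK, h2]
  generalize (√a / √b) ^ ν = d at *
  generalize ∫ u in Set.Ioi (0 : ℝ), u ^ (ν - 1) *
    Real.exp (-(Real.sqrt (b * a) * (u + u⁻¹)) / 2) = I at *
  generalize ∫ z in Set.Ioi (0 : ℝ), z ^ (ν - 1) *
    Real.exp (-(a * z + b * z⁻¹) / 2) = J at *
  field_simp at key ⊢
  linarith

/-- Summation over `Fin p → ℕ` of a product of nonnegative functions of the coordinates. -/
lemma hasSum_pi_prod : ∀ (p : ℕ) (f : Fin p → ℕ → ℝ) (a : Fin p → ℝ) (_ : ∀ k n, 0 ≤ f k n)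
    (_ : ∀ k, HasSum (f k) (a k)),
    HasSum (fun y : Fin p → ℕ => ∏ k, f k (y k)) (∏ k, a k)
  | 0, f, a, _, _ => by
    simp
  | p + 1, f, a, hf, h => by
    have ih := hasSum_pi_prod p (fun k => f k.succ) (fun k => a k.succ)
      (fun k n => hf _ _) (fun k => h _)
    have hs := (h 0).summable.mul_of_nonneg ih.summable (hf 0)
      (fun y => Finset.prod_nonneg fun k _ => hf _ _)
    have := (h 0).mul ih hs
    rw [← (Fin.consEquiv (fun _ : Fin (p + 1) => ℕ)).hasSum_iff, Fin.prod_univ_succ]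
    refine this.of_eq (fun y => ?_) rfl
    simp [Fin.prod_univ_succ, Fin.consEquiv]

/-- Factorial moment series of order `0` (`P` false) or `1` (`P` true) of a Poisson variable,
without the normalizing factor `exp (-t)`. -/
lemma hasSum_poisson_moment (P : Prop) [Decidable P] (t : ℝ) :
    HasSum (fun n : ℕ => (if P then (n : ℝ) else 1) * (t ^ n / n.factorial))
      ((if P then t else 1) * Real.exp t) := by
  have h0 : HasSum (fun n : ℕ => t ^ n / n.factorial) (Real.exp t) := by
    rw [Real.exp_eq_exp_ℝ]
    exact NormedSpace.expSeries_div_hasSum_exp t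
  split_ifs
  · rw [← hasSum_nat_add_iff' 1]
    simp only [Finset.sum_range_one, Nat.cast_zero, zero_mul, sub_zero]
    refine (h0.mul_left t).of_eq (fun n => ?_) rfl
    rw [Nat.factorial_succ]
    push_cast
    field_simp
    ring
  · simpa using h0

/-- Mixed Poisson representation of the mass function. -/
lemma mpgigPMF_eq_integral (p : ℕ) (lam : Fin p → ℝ) (hlam : ∀ i, 0 < lam i) (φ α : ℝ)
    (hφ : 0 < φ) (y : Fin p → ℕ) :
    mpgigPMF p lam φ α y = (2 * besselK α φ)⁻¹ * ∫ z in Set.Ioi (0 : ℝ),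
      (z ^ (α - 1) * Real.exp (-(φ * (z + z⁻¹)) / 2) * Real.exp (-((∑ k, lam k) * z))) *
        ∏ k, (lam k * z) ^ y k / (y k).factorial := by
  have hL : 0 ≤ ∑ k, lam k := Finset.sum_nonneg fun k _ => (hlam k).le
  have hb := besselK_mul_rpow (2 * (∑ k, lam k) + φ) φ ((∑ i, (y i : ℝ)) + α) (by linarith) hφ
  have hcongr : ∫ z in Set.Ioi (0 : ℝ),
      (z ^ (α - 1) * Real.exp (-(φ * (z + z⁻¹)) / 2) * Real.exp (-((∑ k, lam k) * z))) *
        ∏ k, (lam k * z) ^ y k / (y k).factorial =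
      ∫ z in Set.Ioi (0 : ℝ), (∏ k, lam k ^ y k / ((y k).factorial : ℝ)) *
        (z ^ ((∑ i, (y i : ℝ)) + α - 1) *
          Real.exp (-((2 * (∑ k, lam k) + φ) * z + φ * z⁻¹) / 2)) := by
    refine setIntegral_congr_fun measurableSet_Ioi fun z hz => ?_
    have hz : 0 < z := hz
    have h1 : ∏ k, (lam k * z) ^ y k / ((y k).factorial : ℝ) =
        (∏ k, lam k ^ y k / ((y k).factorial : ℝ)) * z ^ (∑ i, y i) := by
      rw [← Finset.prod_pow_eq_pow_sum, ← Finset.prod_mul_distrib]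
      refine Finset.prod_congr rfl fun k _ => ?_
      rw [mul_pow]
      ring
    have h2 : z ^ ((∑ i, (y i : ℝ)) + α - 1) = z ^ (∑ i, y i) * z ^ (α - 1) := by
      rw [add_sub_assoc, Real.rpow_add hz, ← Nat.cast_sum, Real.rpow_natCast]
    have h3 : -((2 * (∑ k, lam k) + φ) * z + φ * z⁻¹) / 2 =
        -(φ * (z + z⁻¹)) / 2 + -((∑ k, lam k) * z) := by ring
    simp only [h1, h2, h3, Real.exp_add]
    ring
  rw [hcongr, integral_const_mul, mpgigPMF]
  have : ∀ K B Q D : ℝ, B / K * Q * D = Q / K * (B * D) := fun K B Q D => by ring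
  rw [this, hb, mul_inv]
  ring

/-- Mixed moments over a set of distinct coordinates; a vanishing `besselK α φ` would make both sides
zero, so its positivity is not needed. -/
lemma hasSum_mpgig_moment (p : ℕ) (lam : Fin p → ℝ) (hlam : ∀ i, 0 < lam i) (φ α : ℝ)
    (hφ : 0 < φ) (S : Finset (Fin p)) :
    HasSum (fun y : Fin p → ℕ => (∏ k ∈ S, (y k : ℝ)) * mpgigPMF p lam φ α y)
      ((∏ k ∈ S, lam k) * (besselK (S.card + α) φ / besselK α φ)) := by
  -- the integrand attached to the multi-index `y`
  let F : (Fin p → ℕ) → ℝ → ℝ := fun y z =>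
    (z ^ (α - 1) * Real.exp (-(φ * (z + z⁻¹)) / 2) * Real.exp (-((∑ k, lam k) * z))) *
      ∏ k, ((if k ∈ S then (y k : ℝ) else 1) * ((lam k * z) ^ y k / (y k).factorial))
  let f : ℝ → ℝ := fun z => (∏ k ∈ S, lam k) *
    (z ^ ((S.card : ℝ) + α - 1) * Real.exp (-(φ * (z + z⁻¹)) / 2))
  have hF0 : ∀ y, ∀ z ∈ Set.Ioi (0 : ℝ), 0 ≤ F y z := fun y z hz => by
    have hz : 0 < z := hz
    refine mul_nonneg (by positivity) (Finset.prod_nonneg fun k _ => ?_)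
    have := (hlam k).le
    split_ifs <;> positivity
  have hFs : ∀ z ∈ Set.Ioi (0 : ℝ), HasSum (fun y => F y z) (f z) := fun z hz => by
    have hz : 0 < z := hz
    have h := (hasSum_pi_prod p
      (fun k n => (if k ∈ S then (n : ℝ) else 1) * ((lam k * z) ^ n / n.factorial)) _
      (fun k n => by
        have := (hlam k).le
        split_ifs <;> positivity)
      (fun k => hasSum_poisson_moment (k ∈ S) (lam k * z))).mul_left
      (z ^ (α - 1) * Real.exp (-(φ * (z + z⁻¹)) / 2) * Real.exp (-((∑ k, lam k) * z)))
    refine h.of_eq (fun y => rfl) ?_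
    rw [Finset.prod_mul_distrib, ← Real.exp_sum, ← Finset.sum_mul, Finset.prod_ite_mem,
      Finset.univ_inter, Finset.prod_mul_distrib, Finset.prod_const, Real.exp_neg]
    simp only [f]
    rw [add_sub_assoc, Real.rpow_add hz, Real.rpow_natCast]
    field_simp
  have hfi : IntegrableOn f (Set.Ioi 0) := (integrableOn_besselK (S.card + α) φ hφ).const_mul _
  have hsum : HasSum (fun y => ∫ z in Set.Ioi (0 : ℝ), F y z) (∫ z in Set.Ioi (0 : ℝ), f z) := by
    -- the terms are nonnegative, so they dominate themselves
    refine hasSum_integral_of_dominated_convergence F (fun y => ?_) (fun y => ?_) ?_ ?_ ?_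
    · exact Measurable.aestronglyMeasurable (by fun_prop)
    · exact (ae_restrict_mem measurableSet_Ioi).mono fun z hz =>
        (Real.norm_of_nonneg (hF0 y z hz)).le
    · exact (ae_restrict_mem measurableSet_Ioi).mono fun z hz => (hFs z hz).summable
    · exact hfi.congr ((ae_restrict_mem measurableSet_Ioi).mono fun z hz => (hFs z hz).tsum_eq.symm)
    · exact (ae_restrict_mem measurableSet_Ioi).mono fun z hz => hFs z hz
  refine (hsum.mul_left (2 * besselK α φ)⁻¹).of_eq (fun y => ?_) ?_
  · rw [mpgigPMF_eq_integral p lam hlam φ α hφ, mul_left_comm, ← integral_const_mul]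
    congr 2
    funext z
    simp only [F]
    rw [Finset.prod_mul_distrib, Finset.prod_ite_mem, Finset.univ_inter]
    ring
  · simp only [f]
    rw [integral_const_mul, besselK, mul_inv]
    ring

/-- for `i ≠ j`, `E(Y_i Y_j)` is finite and
`cov(Y_i,Y_j) = λ_i λ_j {R_{α,2}(φ) − R_α(φ)²}`, where `R_{α,k}(φ) = K_{k+α}(φ)/K_α(φ)`. -/
theorem mpgig_covariance (p : ℕ) (hp : 1 ≤ p) (lam : Fin p → ℝ) (hlam : ∀ i, 0 < lam i)
    (φ α : ℝ) (hφ : 0 < φ) (i j : Fin p) (hij : i ≠ j) :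
    Summable (fun y : Fin p → ℕ => (y i : ℝ) * (y j : ℝ) * mpgigPMF p lam φ α y) ∧
    (∑' y : Fin p → ℕ, (y i : ℝ) * (y j : ℝ) * mpgigPMF p lam φ α y)
        - (∑' y : Fin p → ℕ, (y i : ℝ) * mpgigPMF p lam φ α y)
          * (∑' y : Fin p → ℕ, (y j : ℝ) * mpgigPMF p lam φ α y)
      = lam i * lam j *
          (besselK (2 + α) φ / besselK α φ - (besselK (1 + α) φ / besselK α φ) ^ 2) := by
  have h1 := hasSum_mpgig_moment p lam hlam φ α hφ {i}
  have h2 := hasSum_mpgig_moment p lam hlam φ α hφ {j}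
  have h3 := hasSum_mpgig_moment p lam hlam φ α hφ {i, j}
  simp only [Finset.prod_singleton, Finset.card_singleton, Nat.cast_one] at h1 h2
  simp only [Finset.prod_pair hij, Finset.card_pair hij, Nat.cast_ofNat] at h3
  refine ⟨h3.summable, ?_⟩
  rw [h1.tsum_eq, h2.tsum_eq, h3.tsum_eq]
  ring
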